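/- If f and g both belong to the class LC^n, then f + g belongs to LC^n. -/

import Mathlib

/-!
The regularity and Lipschitz conditions pass to sums because the Hessian of `f + g` is the sum of
the two Hessians. For the condition at infinity, let `A` and `B` be the Hessians of `f` and `g` at
a far point. The second derivative of a `C²` function is symmetric, so `A` is symmetric and
positive definite, and `‖A⁻¹‖ ≤ C` yields the coercivity estimate `‖v‖² ≤ C ⟪A v, v⟫`
(`sq_norm_le_of_inverse_bound`). As `B` is positive definite, `‖v‖² ≤ C ⟪(A + B) v, v⟫`, and an
operator with this property on a finite-dimensional space has an inverse of norm at most `C`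
(`exists_inverse_of_coercive`). In particular the constant `C` of `f` alone serves for `f + g`.
-/

open scoped RealInnerProductSpace

/-- The class `LCⁿ`: functions `f : ℝⁿ → ℝ` that are twice differentiable with Lipschitz
continuous second derivative and such that, for some constants `C` and `R`, the Hessian
`∇²f(x)` is positive definite with `‖∇²f(x)⁻¹‖ ≤ C` whenever `‖x‖ ≥ R`.  The Hessian at `x`
is the derivative of the gradient, `fderiv ℝ (gradient f) x`. -/
def MemLC {ι : Type*} [Fintype ι] (f : EuclideanSpace ℝ ι → ℝ) : Prop :=
  ContDiff ℝ 2 f ∧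
  (∃ L : NNReal, LipschitzWith L fun x => fderiv ℝ (gradient f) x) ∧
  ∃ C R : ℝ, ∀ x : EuclideanSpace ℝ ι, R ≤ ‖x‖ →
    (∀ v : EuclideanSpace ℝ ι, v ≠ 0 → 0 < ⟪fderiv ℝ (gradient f) x v, v⟫) ∧
    ∃ g : EuclideanSpace ℝ ι →L[ℝ] EuclideanSpace ℝ ι,
      (fderiv ℝ (gradient f) x).comp g = ContinuousLinearMap.id ℝ _ ∧
      g.comp (fderiv ℝ (gradient f) x) = ContinuousLinearMap.id ℝ _ ∧ ‖g‖ ≤ C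

/-- A symmetric positive operator whose inverse has norm at most `C` is bounded below, as a
quadratic form, by `1 / C`. -/
lemma sq_norm_le_of_inverse_bound {E : Type*} [NormedAddCommGroup E] [InnerProductSpace ℝ E]
    (A G : E →L[ℝ] E) {C : ℝ}
    (hsymm : ∀ v w, ⟪A v, w⟫ = ⟪A w, v⟫) (hpos : ∀ v, v ≠ 0 → 0 < ⟪A v, v⟫)
    (hAG : A.comp G = ContinuousLinearMap.id ℝ _) (hG : ‖G‖ ≤ C) (v : E) :
    ‖v‖ ^ 2 ≤ C * ⟪A v, v⟫ := by
  rcases eq_or_ne v 0 with rfl | hv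
  · simp
  have hAGv : A (G v) = v := DFunLike.congr_fun hAG v
  have hv' : 0 < ‖v‖ := norm_pos_iff.2 hv
  have hGv : ‖G v‖ ≤ C * ‖v‖ := G.le_of_opNorm_le hG v
  have hC : 0 < C := by
    have hGv0 : G v ≠ 0 := fun h => hv (by rw [← hAGv, h, map_zero])
    exact pos_of_mul_pos_left ((norm_pos_iff.2 hGv0).trans_le hGv) hv'.le
  have hinner : ⟪v, G v⟫ ≤ C * ‖v‖ ^ 2 := by
    nlinarith [real_inner_le_norm v (G v)]
  -- Positivity at `A⁻¹ v - C v`, where the cross term is `-2 C ‖v‖²` by symmetry.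
  have hq : 0 ≤ ⟪A (G v - C • v), G v - C • v⟫ := by
    rcases eq_or_ne (G v - C • v) 0 with h | h
    · simp [h]
    · exact (hpos _ h).le
  have hcross : ⟪A v, G v⟫ = ‖v‖ ^ 2 := by
    rw [hsymm, hAGv, real_inner_self_eq_norm_sq]
  simp only [map_sub, map_smul, hAGv, inner_sub_left, inner_sub_right, real_inner_smul_left,
    real_inner_smul_right, hcross, real_inner_self_eq_norm_sq] at hq
  refine le_of_mul_le_mul_left ?_ hC
  linarith

/-- Lax–Milgram in finite dimension, with the bound on the inverse. -/
lemma exists_inverse_of_coercive {E : Type*} [NormedAddCommGroup E] [InnerProductSpace ℝ E]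
    [FiniteDimensional ℝ E] (T : E →L[ℝ] E) {C : ℝ} (hC : 0 ≤ C)
    (hT : ∀ v, ‖v‖ ^ 2 ≤ C * ⟪T v, v⟫) :
    ∃ G : E →L[ℝ] E, T.comp G = ContinuousLinearMap.id ℝ _ ∧
      G.comp T = ContinuousLinearMap.id ℝ _ ∧ ‖G‖ ≤ C := by
  have hbound : ∀ v, ‖v‖ ≤ C * ‖T v‖ := by
    intro v
    rcases eq_or_ne v 0 with rfl | hv
    · simp
    refine le_of_mul_le_mul_right ?_ (norm_pos_iff.2 hv)
    have := mul_le_mul_of_nonneg_left (real_inner_le_norm (T v) v) hC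
    linarith [hT v]
  have hinj : Function.Injective (T : E →ₗ[ℝ] E) := by
    refine (injective_iff_map_eq_zero _).2 fun v hv => ?_
    have hv' : T v = 0 := hv
    simpa [hv'] using hbound v
  let e := (LinearEquiv.ofInjectiveEndo (T : E →ₗ[ℝ] E) hinj).toContinuousLinearEquiv
  have he : ∀ v, e v = T v := fun _ => rfl
  refine ⟨e.symm, ?_, ?_, ?_⟩
  · ext1 v
    exact (he _).symm.trans (e.apply_symm_apply v)
  · ext1 v
    exact (congrArg e.symm (he v).symm).trans (e.symm_apply_apply v)
  · refine ContinuousLinearMap.opNorm_le_bound _ hC fun v => ?_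
    have h := hbound (e.symm v)
    rwa [← he, e.apply_symm_apply] at h

section Hessian

variable {E : Type*} [NormedAddCommGroup E] [InnerProductSpace ℝ E] [CompleteSpace E]

lemma differentiable_gradient {f : E → ℝ} (hf : ContDiff ℝ 2 f) :
    Differentiable ℝ (gradient f) := fun x =>
  (InnerProductSpace.toDual ℝ E).symm.differentiable.comp
    ((hf.fderiv_right (m := 1) (by norm_num)).differentiable (by norm_num)) x

lemma inner_fderiv_gradient {f : E → ℝ} (hf : ContDiff ℝ 2 f) (x v w : E) :
    ⟪fderiv ℝ (gradient f) x v, w⟫ = fderiv ℝ (fderiv ℝ f) x v w := by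
  -- Both sides are the derivative at `x` in direction `v` of `y ↦ ⟪∇f y, w⟫ = Df(y) w`.
  have h : (fun y => ⟪gradient f y, w⟫) = fun y => fderiv ℝ f y w := by
    funext y
    exact InnerProductSpace.toDual_symm_apply
  have h₁ := (differentiable_gradient hf x).hasFDerivAt.inner ℝ (hasFDerivAt_const w x)
  have h₂ := ((hf.fderiv_right (m := 1) (by norm_num)).differentiable (by norm_num)
    x).hasFDerivAt.clm_apply (hasFDerivAt_const w x)
  rw [h] at h₁
  simpa using DFunLike.congr_fun (h₁.unique h₂) v

lemma inner_fderiv_gradient_comm {f : E → ℝ} (hf : ContDiff ℝ 2 f) (x v w : E) :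
    ⟪fderiv ℝ (gradient f) x v, w⟫ = ⟪fderiv ℝ (gradient f) x w, v⟫ := by
  rw [inner_fderiv_gradient hf, inner_fderiv_gradient hf]
  exact (hf.contDiffAt.isSymmSndFDerivAt (by simp)) v w

lemma fderiv_gradient_add {f g : E → ℝ} (hf : ContDiff ℝ 2 f) (hg : ContDiff ℝ 2 g) (x : E) :
    fderiv ℝ (gradient fun y => f y + g y) x =
      fderiv ℝ (gradient f) x + fderiv ℝ (gradient g) x := by
  have h : (gradient fun y => f y + g y) = fun y => gradient f y + gradient g y := by
    funext y
    simp only [gradient]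
    rw [fderiv_fun_add (hf.differentiable (by norm_num) y) (hg.differentiable (by norm_num) y),
      map_add]
  rw [h]
  exact fderiv_fun_add (differentiable_gradient hf x) (differentiable_gradient hg x)

end Hessian

/-- The class `LCⁿ` is closed under addition. -/
theorem memLC_add_stmt17 (n : ℕ) (f g : EuclideanSpace ℝ (Fin n) → ℝ)
    (hf : MemLC f) (hg : MemLC g) : MemLC (fun x => f x + g x) := by
  obtain ⟨hf2, ⟨L, hL⟩, C, R, hCR⟩ := hf
  obtain ⟨hg2, ⟨L', hL'⟩, C', R', hCR'⟩ := hg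
  refine ⟨hf2.add hg2, ⟨L + L', ?_⟩, C, max R R', fun x hx => ?_⟩
  · simp only [fderiv_gradient_add hf2 hg2]
    exact hL.add hL'
  obtain ⟨hA, G, hAG, -, hG⟩ := hCR x ((le_max_left _ _).trans hx)
  obtain ⟨hB, -⟩ := hCR' x ((le_max_right _ _).trans hx)
  have hC : 0 ≤ C := (norm_nonneg G).trans hG
  rw [fderiv_gradient_add hf2 hg2]
  refine ⟨fun v hv => ?_, exists_inverse_of_coercive _ hC fun v => ?_⟩
  · rw [add_apply, inner_add_left]
    exact add_pos (hA v hv) (hB v hv)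
  · refine (sq_norm_le_of_inverse_bound _ G (inner_fderiv_gradient_comm hf2 x) hA hAG hG v).trans
      (mul_le_mul_of_nonneg_left ?_ hC)
    rw [add_apply, inner_add_left]
    rcases eq_or_ne v 0 with rfl | hv
    · simp
    · exact le_add_of_nonneg_right (hB v hv).le
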